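/- arXiv:2204.00870 — 2 statements merged into one kernel-verified Lean document; each statement's English description precedes it below -/
import Mathlib

section
/- Completeness of threshold refutation for deterministic programs: let T_new and T_old be two terminating transition systems sharing an input type X, input set Θ₀, and initial-state maps ι_new, ι_old, and assume both systems are deterministic, i.e., every state of each system has exactly one successor. If t ∈ ℝ is not a threshold for the DiffCost problem, then there exist an anti-potential function χ_new for T_new and a potential function φ_old for T_old such that χ_new(ι_new x) − φ_old(ι_old x) > t for at least one x ∈ Θ₀. -/
/-- A run of the transition system from state `s`. -/
def IsRun {S : Type*} (step : S → S → Prop) (s : S) (ρ : ℕ → S) : Prop :=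
  ρ 0 = s ∧ ∀ n, step (ρ n) (ρ (n + 1))

/-- `s'` is reachable from `s`. -/
def ReachableFrom {S : Type*} (step : S → S → Prop) (s s' : S) : Prop :=
  ∃ ρ n, IsRun step s ρ ∧ ρ n = s'

/-- `s'` is reachable from some initial state in `Init`. -/
def Reachable {S : Type*} (step : S → S → Prop) (Init : Set S) (s' : S) : Prop :=
  ∃ s ∈ Init, ReachableFrom step s s'

/-- The system is terminating: every run from a reachable state visits a terminal state. -/
def Terminating {S : Type*} (step : S → S → Prop) (Term Init : Set S) : Prop :=
  ∀ s, Reachable step Init s → ∀ ρ, IsRun step s ρ → ∃ n, ρ n ∈ Term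

/-- The cost of a run: `c (ρ N) - c (ρ 0)` where `N` is the least index with `ρ N ∈ Term`. -/
noncomputable def RunCost {S : Type*} (Term : Set S) (c : S → ℤ) (ρ : ℕ → S) : ℤ :=
  c (ρ (sInf {n | ρ n ∈ Term})) - c (ρ 0)

/-- Potential function: sufficiency preservation and sufficiency on termination. -/
def IsPF {S : Type*} (step : S → S → Prop) (Term Init : Set S) (c : S → ℤ)
    (φ : S → ℝ) : Prop :=
  (∀ s s', Reachable step Init s → step s s' →
    φ s ≥ φ s' + ((c s' : ℝ) - (c s : ℝ))) ∧
  (∀ s, Reachable step Init s → s ∈ Term → φ s ≥ 0)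

/-- Anti-potential function: insufficiency preservation and insufficiency on termination. -/
def IsAntiPF {S : Type*} (step : S → S → Prop) (Term Init : Set S) (c : S → ℤ)
    (χ : S → ℝ) : Prop :=
  (∀ s s', Reachable step Init s → step s s' →
    χ s ≤ χ s' + ((c s' : ℝ) - (c s : ℝ))) ∧
  (∀ s, Reachable step Init s → s ∈ Term → χ s ≤ 0)

/-- `t` is a threshold for the DiffCost problem. -/
noncomputable def IsThreshold {Sn So X : Type*}
    (stepN : Sn → Sn → Prop) (TermN : Set Sn) (cN : Sn → ℤ)
    (stepO : So → So → Prop) (TermO : Set So) (cO : So → ℤ)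
    (Θ₀ : Set X) (ιN : X → Sn) (ιO : X → So) (t : ℝ) : Prop :=
  ∀ x ∈ Θ₀, ∀ ρN : ℕ → Sn, IsRun stepN (ιN x) ρN →
    ∀ ρO : ℕ → So, IsRun stepO (ιO x) ρO →
      ((RunCost TermN cN ρN : ℝ) - (RunCost TermO cO ρO : ℝ)) ≤ t

/-!
When all runs from `s` have the same cost, let `f s` be this cost. Prepending `s` to a run from a
successor `s'` adds `c s' - c s` to its cost; hence uniqueness of the cost passes from `s` to `s'`,
and so from the initial states to all reachable ones, and `f s = f s' + (c s' - c s)`. As runs from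
terminal states cost `0`, `f` is both a potential and an anti-potential. Taking `f` for both systems
turns a pair of runs violating the threshold `t` into the required inequality.
-/

section Runs

variable {S : Type*} {step : S → S → Prop} {Term Init : Set S} {s s' : S} {ρ σ : ℕ → S}

theorem IsRun.unique (hstep : Relator.RightUnique step) (hρ : IsRun step s ρ)
    (hσ : IsRun step s σ) : ρ = σ := by
  funext n
  induction n with
  | zero => rw [hρ.1, hσ.1]
  | succ n ih => exact hstep (hρ.2 n) (ih ▸ hσ.2 n)

theorem exists_isRun (hsucc : ∀ s, ∃ s', step s s') (s : S) : ∃ ρ, IsRun step s ρ := by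
  choose next hnext using hsucc
  refine ⟨fun n => next^[n] s, rfl, fun n => ?_⟩
  simpa only [Function.iterate_succ_apply'] using hnext (next^[n] s)

theorem IsRun.exists_cons (hstep : step s s') (hρ : IsRun step s' ρ) :
    ∃ σ, IsRun step s σ ∧ (fun n => σ (n + 1)) = ρ := by
  refine ⟨fun | 0 => s | n + 1 => ρ n, ⟨rfl, fun n => ?_⟩, rfl⟩
  cases n with
  | zero => simpa only [hρ.1] using hstep
  | succ n => exact hρ.2 n

theorem IsRun.reachable (hs : s ∈ Init) (hρ : IsRun step s ρ) (n : ℕ) :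
    Reachable step Init (ρ n) :=
  ⟨s, hs, ρ, n, hρ, rfl⟩

theorem runCost_eq_zero (c : S → ℤ) (h : ρ 0 ∈ Term) : RunCost Term c ρ = 0 := by
  have hfirst : sInf {n | ρ n ∈ Term} = 0 := Nat.sInf_eq_zero.2 (Or.inl h)
  rw [RunCost, hfirst, sub_self]

theorem runCost_eq_tail_add_of_notMem (c : S → ℤ) (hstart : ρ 0 ∉ Term)
    (hvisit : ∃ n, ρ n ∈ Term) :
    RunCost Term c ρ = RunCost Term c (fun n => ρ (n + 1)) + (c (ρ 1) - c (ρ 0)) := by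
  have hpos : 1 ≤ sInf {n | ρ n ∈ Term} := by
    by_contra! hlt
    have hfirst : ρ (sInf {n | ρ n ∈ Term}) ∈ Term := Nat.sInf_mem hvisit
    rw [Nat.lt_one_iff.1 hlt] at hfirst
    exact hstart hfirst
  have hshift := Nat.sInf_add (p := fun n => ρ n ∈ Term) hpos
  simp only [RunCost, ← hshift]
  ring

theorem IsRun.runCost_eq_tail_add (c : S → ℤ) (hTerm : ∀ s ∈ Term, ∀ s', step s s' → s' = s)
    (hρ : IsRun step s ρ) (hvisit : ∃ n, ρ n ∈ Term) :
    RunCost Term c ρ = RunCost Term c (fun n => ρ (n + 1)) + (c (ρ 1) - c (ρ 0)) := by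
  by_cases hstart : ρ 0 ∈ Term
  · have hstay : ρ 1 = ρ 0 := hTerm _ hstart _ (hρ.2 0)
    have htail : ρ 1 ∈ Term := hstay ▸ hstart
    rw [runCost_eq_zero c hstart, runCost_eq_zero (ρ := fun n => ρ (n + 1)) c htail, hstay,
      sub_self, add_zero]
  · exact runCost_eq_tail_add_of_notMem c hstart hvisit

end Runs

/-- All runs from `s` have the same cost, although the runs themselves may differ. This is
what makes the cost a function of the state. -/
def HasUniqueRunCost {S : Type*} (step : S → S → Prop) (Term : Set S) (c : S → ℤ) (s : S) : Prop :=
  ∀ ρ σ, IsRun step s ρ → IsRun step s σ → RunCost Term c ρ = RunCost Term c σ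

section UniqueRunCost

variable {S : Type*} {step : S → S → Prop} {Term Init : Set S} {c : S → ℤ} {s s' : S}

theorem hasUniqueRunCost_of_rightUnique (hstep : Relator.RightUnique step) (s : S) :
    HasUniqueRunCost step Term c s :=
  fun _ _ hρ hσ => congrArg (RunCost Term c) (hρ.unique hstep hσ)

theorem HasUniqueRunCost.runCost_eq_add_of_step
    (hTerm : ∀ s ∈ Term, ∀ s', step s s' → s' = s) (hs : HasUniqueRunCost step Term c s)
    (hvisit : ∀ ρ, IsRun step s ρ → ∃ n, ρ n ∈ Term) (hstep : step s s') {ρ σ : ℕ → S}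
    (hρ : IsRun step s ρ) (hσ : IsRun step s' σ) :
    RunCost Term c ρ = RunCost Term c σ + (c s' - c s) := by
  obtain ⟨τ, hτ, rfl⟩ := hσ.exists_cons hstep
  calc RunCost Term c ρ = RunCost Term c τ := hs ρ τ hρ hτ
    _ = RunCost Term c (fun n => τ (n + 1)) + (c (τ 1) - c (τ 0)) :=
      hτ.runCost_eq_tail_add c hTerm (hvisit τ hτ)
    _ = RunCost Term c (fun n => τ (n + 1)) + (c s' - c s) := by
      rw [hτ.1, show τ 1 = s' from hσ.1]

theorem HasUniqueRunCost.of_step (hTerm : ∀ s ∈ Term, ∀ s', step s s' → s' = s)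
    (hs : HasUniqueRunCost step Term c s) (hvisit : ∀ ρ, IsRun step s ρ → ∃ n, ρ n ∈ Term)
    (hstep : step s s') : HasUniqueRunCost step Term c s' := by
  intro ρ σ hρ hσ
  obtain ⟨τ, hτ, -⟩ := hρ.exists_cons hstep
  exact add_right_cancel <| (hs.runCost_eq_add_of_step hTerm hvisit hstep hτ hρ).symm.trans
    (hs.runCost_eq_add_of_step hTerm hvisit hstep hτ hσ)

theorem Reachable.hasUniqueRunCost (hTerm : ∀ s ∈ Term, ∀ s', step s s' → s' = s)
    (hterminating : Terminating step Term Init)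
    (hcost : ∀ s ∈ Init, HasUniqueRunCost step Term c s) (hs : Reachable step Init s) :
    HasUniqueRunCost step Term c s := by
  obtain ⟨s₀, hs₀, ρ, n, hρ, rfl⟩ := hs
  induction n with
  | zero => exact hρ.1.symm ▸ hcost s₀ hs₀
  | succ n ih => exact ih.of_step hTerm (hterminating _ (hρ.reachable hs₀ n)) (hρ.2 n)

theorem exists_isPF_isAntiPF_eq_runCost (hsucc : ∀ s, ∃ s', step s s')
    (hTerm : ∀ s ∈ Term, ∀ s', step s s' → s' = s) (hterminating : Terminating step Term Init)
    (hcost : ∀ s ∈ Init, HasUniqueRunCost step Term c s) :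
    ∃ f : S → ℝ, IsPF step Term Init c f ∧ IsAntiPF step Term Init c f ∧
      ∀ s ∈ Init, ∀ ρ, IsRun step s ρ → f s = RunCost Term c ρ := by
  choose run hrun using exists_isRun hsucc
  have hstep : ∀ s s', Reachable step Init s → step s s' →
      (RunCost Term c (run s) : ℝ) = RunCost Term c (run s') + ((c s' : ℝ) - (c s : ℝ)) := by
    intro s s' hs hss'
    exact_mod_cast (hs.hasUniqueRunCost hTerm hterminating hcost).runCost_eq_add_of_step hTerm
      (hterminating s hs) hss' (hrun s) (hrun s')
  have hterm : ∀ s ∈ Term, (RunCost Term c (run s) : ℝ) = 0 := fun s hs => by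
    exact_mod_cast runCost_eq_zero c ((hrun s).1.symm ▸ hs)
  exact ⟨fun s => RunCost Term c (run s),
    ⟨fun s s' hs hss' => (hstep s s' hs hss').ge, fun s _ hs => (hterm s hs).ge⟩,
    ⟨fun s s' hs hss' => (hstep s s' hs hss').le, fun s _ hs => (hterm s hs).le⟩,
    fun s hs ρ hρ => congrArg Int.cast (hcost s hs _ _ (hrun s) hρ)⟩

end UniqueRunCost

theorem refute_threshold_complete_deterministic_general {Sn So X : Type*}
    {stepN : Sn → Sn → Prop} {TermN : Set Sn} {cN : Sn → ℤ}
    {stepO : So → So → Prop} {TermO : Set So} {cO : So → ℤ}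
    {Θ₀ : Set X} {ιN : X → Sn} {ιO : X → So}
    (hsuccN : ∀ s : Sn, ∃ s', stepN s s')
    (hsuccO : ∀ s : So, ∃ s', stepO s s')
    (hcostN : ∀ s ∈ ιN '' Θ₀, HasUniqueRunCost stepN TermN cN s)
    (hcostO : ∀ s ∈ ιO '' Θ₀, HasUniqueRunCost stepO TermO cO s)
    (hTermN : ∀ s ∈ TermN, ∀ s', stepN s s' → s' = s)
    (hTermO : ∀ s ∈ TermO, ∀ s', stepO s s' → s' = s)
    (hterminatingN : Terminating stepN TermN (ιN '' Θ₀))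
    (hterminatingO : Terminating stepO TermO (ιO '' Θ₀))
    {t : ℝ} (ht : ¬ IsThreshold stepN TermN cN stepO TermO cO Θ₀ ιN ιO t) :
    ∃ (χN : Sn → ℝ) (φO : So → ℝ),
      IsAntiPF stepN TermN (ιN '' Θ₀) cN χN ∧
      IsPF stepO TermO (ιO '' Θ₀) cO φO ∧
      ∃ x ∈ Θ₀, χN (ιN x) - φO (ιO x) > t := by
  obtain ⟨χN, -, hχN, hχcost⟩ :=
    exists_isPF_isAntiPF_eq_runCost hsuccN hTermN hterminatingN hcostN
  obtain ⟨φO, hφO, -, hφcost⟩ :=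
    exists_isPF_isAntiPF_eq_runCost hsuccO hTermO hterminatingO hcostO
  simp only [IsThreshold, not_forall, not_le] at ht
  obtain ⟨x, hx, ρN, hρN, ρO, hρO, hlt⟩ := ht
  refine ⟨χN, φO, hχN, hφO, x, hx, ?_⟩
  rwa [hχcost _ (Set.mem_image_of_mem ιN hx) ρN hρN,
    hφcost _ (Set.mem_image_of_mem ιO hx) ρO hρO]

/-- completeness of threshold refutation for deterministic programs. -/
theorem refute_threshold_complete_deterministic {Sn So X : Type*}
    (stepN : Sn → Sn → Prop) (TermN : Set Sn) (cN : Sn → ℤ)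
    (stepO : So → So → Prop) (TermO : Set So) (cO : So → ℤ)
    (Θ₀ : Set X) (ιN : X → Sn) (ιO : X → So)
    (hdetN : ∀ s : Sn, ∃! s', stepN s s')
    (hdetO : ∀ s : So, ∃! s', stepO s s')
    (hTermN : ∀ s ∈ TermN, ∀ s', stepN s s' → s' = s)
    (hTermO : ∀ s ∈ TermO, ∀ s', stepO s s' → s' = s)
    (hterminatingN : Terminating stepN TermN (ιN '' Θ₀))
    (hterminatingO : Terminating stepO TermO (ιO '' Θ₀))
    (t : ℝ) (ht : ¬ IsThreshold stepN TermN cN stepO TermO cO Θ₀ ιN ιO t) :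
    ∃ (χN : Sn → ℝ) (φO : So → ℝ),
      IsAntiPF stepN TermN (ιN '' Θ₀) cN χN ∧
      IsPF stepO TermO (ιO '' Θ₀) cO φO ∧
      ∃ x ∈ Θ₀, χN (ιN x) - φO (ιO x) > t :=
  refute_threshold_complete_deterministic_general
    (fun s => (hdetN s).exists) (fun s => (hdetO s).exists)
    (fun s _ => hasUniqueRunCost_of_rightUnique (fun s _ _ => (hdetN s).unique) s)
    (fun s _ => hasUniqueRunCost_of_rightUnique (fun s _ _ => (hdetO s).unique) s)
    hTermN hTermO hterminatingN hterminatingO ht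
end

section
/- Let a transition system with states S, total successor relation step, terminal set Term (terminal states only step to themselves), initial set Init, and cost valuation c : S → ℤ be terminating, and let φ be a potential function and χ an anti-potential function for it. Then for every initial state s ∈ Init and every two runs ρ and ρ' from s, Cost(ρ) − Cost(ρ') ≤ φ(s) − χ(s). -/
/-!
Along a run through reachable states `φ + c` never increases, since this is what preservation for
a potential function says of each step. Comparing its values at the start and at the first terminal
state, where `φ ≥ 0`, bounds the cost of the run by `φ s`. Negating both `c` and `χ` turns an
anti-potential function into a potential function, so the same argument bounds costs below by `χ s`.
-/

section

variable {S : Type*} {step : S → S → Prop} {Term Init : Set S} {c : S → ℤ} {φ χ : S → ℝ}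
  {s : S} {ρ : ℕ → S}

theorem ReachableFrom.trans {s₁ s₂ s₃ : S} (h₁₂ : ReachableFrom step s₁ s₂)
    (h₂₃ : ReachableFrom step s₂ s₃) : ReachableFrom step s₁ s₃ := by
  obtain ⟨σ, m, ⟨hσ_zero, hσ_step⟩, hσ_m⟩ := h₁₂
  obtain ⟨τ, n, ⟨hτ_zero, hτ_step⟩, hτ_n⟩ := h₂₃
  have splice : σ m = τ 0 := hσ_m.trans hτ_zero.symm
  refine ⟨fun k => if k < m then σ k else τ (k - m), m + n, ⟨?_, fun k => ?_⟩, by simpa⟩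
  · rcases m.eq_zero_or_pos with rfl | hm
    · simpa [← splice]
    · simpa [hm]
  · rcases lt_trichotomy (k + 1) m with hk | rfl | hk
    · simpa [hk, Nat.lt_of_succ_lt hk] using hσ_step k
    · simpa [← splice] using hσ_step k
    · have hmk : m ≤ k := Nat.le_of_lt_succ hk
      simpa [hk.not_gt, hmk.not_gt, Nat.sub_add_comm hmk] using hτ_step (k - m)

theorem Reachable.of_mem (hs : s ∈ Init) (hρ : IsRun step s ρ) : Reachable step Init s :=
  ⟨s, hs, ρ, 0, hρ, hρ.1⟩

theorem Reachable.apply_of_isRun (hs : Reachable step Init s) (hρ : IsRun step s ρ) (n : ℕ) :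
    Reachable step Init (ρ n) :=
  let ⟨s₀, hs₀, hs₀s⟩ := hs
  ⟨s₀, hs₀, hs₀s.trans ⟨ρ, n, hρ, rfl⟩⟩

theorem runCost_neg : RunCost Term (-c) ρ = -RunCost Term c ρ := by
  simp only [RunCost, Pi.neg_apply]
  ring

theorem IsPF.antitone_add_cost (hφ : IsPF step Term Init c φ) (hs : Reachable step Init s)
    (hρ : IsRun step s ρ) : Antitone fun n => φ (ρ n) + c (ρ n) :=
  antitone_nat_of_succ_le fun n => by
    linarith [hφ.1 _ _ (hs.apply_of_isRun hρ n) (hρ.2 n)]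

theorem IsPF.runCost_le (hφ : IsPF step Term Init c φ) (hs : Reachable step Init s)
    (hρ : IsRun step s ρ) (hterm : ∃ n, ρ n ∈ Term) : (RunCost Term c ρ : ℝ) ≤ φ s := by
  set N := sInf {n | ρ n ∈ Term} with hN
  have hN_term : ρ N ∈ Term := Nat.sInf_mem hterm
  have hN_nonneg : 0 ≤ φ (ρ N) := hφ.2 _ (hs.apply_of_isRun hρ N) hN_term
  have hN_le : φ (ρ N) + c (ρ N) ≤ φ (ρ 0) + c (ρ 0) := hφ.antitone_add_cost hs hρ N.zero_le
  calc (RunCost Term c ρ : ℝ) = c (ρ N) - c (ρ 0) := by rw [RunCost, ← hN, Int.cast_sub]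
    _ ≤ φ (ρ 0) := by linarith
    _ = φ s := by rw [hρ.1]

theorem IsAntiPF.neg (hχ : IsAntiPF step Term Init c χ) : IsPF step Term Init (-c) (-χ) := by
  refine ⟨fun s s' hs hstep => ?_, fun s hs hsTerm => neg_nonneg.mpr (hχ.2 s hs hsTerm)⟩
  simp only [Pi.neg_apply, Int.cast_neg]
  linarith [hχ.1 s s' hs hstep]

theorem IsAntiPF.le_runCost (hχ : IsAntiPF step Term Init c χ) (hs : Reachable step Init s)
    (hρ : IsRun step s ρ) (hterm : ∃ n, ρ n ∈ Term) : χ s ≤ RunCost Term c ρ := by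
  have hneg : ((RunCost Term (-c) ρ : ℤ) : ℝ) ≤ -χ s := hχ.neg.runCost_le hs hρ hterm
  rwa [runCost_neg, Int.cast_neg, neg_le_neg_iff] at hneg

theorem pf_antipf_single_program_bound_general {ρ' : ℕ → S} (hφ : IsPF step Term Init c φ)
    (hχ : IsAntiPF step Term Init c χ) (hs : Reachable step Init s)
    (hρ : IsRun step s ρ) (hρ' : IsRun step s ρ')
    (hterm : ∃ n, ρ n ∈ Term) (hterm' : ∃ n, ρ' n ∈ Term) :
    (RunCost Term c ρ : ℝ) - RunCost Term c ρ' ≤ φ s - χ s :=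
  sub_le_sub (hφ.runCost_le hs hρ hterm) (hχ.le_runCost hs hρ' hterm')

end

/-- for a single terminating system with a PF `φ` and an anti-PF `χ`,
the costs of any two runs from the same initial state differ by at most `φ s - χ s`. -/
theorem pf_antipf_single_program_bound {S : Type*}
    (step : S → S → Prop) (Term Init : Set S) (c : S → ℤ)
    (htotal : ∀ s : S, ∃ s', step s s')
    (hTerm : ∀ s ∈ Term, ∀ s', step s s' → s' = s)
    (hterminating : Terminating step Term Init)
    (φ : S → ℝ) (hφ : IsPF step Term Init c φ)
    (χ : S → ℝ) (hχ : IsAntiPF step Term Init c χ)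
    (s : S) (hs : s ∈ Init)
    (ρ ρ' : ℕ → S) (hρ : IsRun step s ρ) (hρ' : IsRun step s ρ') :
    ((RunCost Term c ρ : ℝ) - (RunCost Term c ρ' : ℝ)) ≤ φ s - χ s :=
  have hreach : Reachable step Init s := .of_mem hs hρ
  pf_antipf_single_program_bound_general hφ hχ hreach hρ hρ'
    (hterminating s hreach ρ hρ) (hterminating s hreach ρ' hρ')
end
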